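/- arXiv:math/9509223 — 2 statements merged into one kernel-verified Lean document; each statement's English description precedes it below -/
import Mathlib

section
/- (Watson's transformation of a terminating very-well-poised ₈φ₇ into a terminating balanced ₄φ₃) Let q, a, b, c, d, e be complex numbers and n a nonnegative integer, with all denominator factors below nonzero. Then ∑_{k=0}^{n} ((1 - a q^{2k})/(1 - a)) · ((a;q)_k (b;q)_k (c;q)_k (d;q)_k (e;q)_k (q^{-n};q)_k / ((q;q)_k (aq/b;q)_k (aq/c;q)_k (aq/d;q)_k (aq/e;q)_k (aq^{n+1};q)_k)) (a² q^{2+n}/(bcde))^k = ((aq;q)_n (aq/(de);q)_n / ((aq/d;q)_n (aq/e;q)_n)) · ∑_{k=0}^{n} ((q^{-n};q)_k (d;q)_k (e;q)_k (aq/(bc);q)_k / ((q;q)_k (aq/b;q)_k (aq/c;q)_k (d e q^{-n}/a;q)_k)) q^k. -/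
/-- The finite q-shifted factorial `(a;q)_k = ∏_{j=0}^{k-1} (1 - a q^j)`. -/
noncomputable def qPoch (a q : ℂ) (k : ℕ) : ℂ := ∏ j ∈ Finset.range k, (1 - a * q ^ j)

theorem qP_zero (a q : ℂ) : qPoch a q 0 = 1 := by simp [qPoch]

theorem qP_succ (a q : ℂ) (k : ℕ) : qPoch a q (k+1) = qPoch a q k * (1 - a * q^k) := by
  simp [qPoch, Finset.prod_range_succ]

theorem qP_add (a q : ℂ) (m k : ℕ) :
    qPoch a q (m+k) = qPoch a q m * qPoch (a * q^m) q k := by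
  induction k with
  | zero => simp [qP_zero]
  | succ k ih => rw [← add_assoc, qP_succ, qP_succ, ih, pow_add]; ring

theorem qP_ne {a q : ℂ} {m n : ℕ} (h : qPoch a q n ≠ 0) (hm : m ≤ n) : qPoch a q m ≠ 0 := by
  obtain ⟨k, rfl⟩ := Nat.exists_eq_add_of_le hm
  rw [qP_add] at h
  exact left_ne_zero_of_mul h

theorem qP_fac {a q : ℂ} {m n : ℕ} (h : qPoch a q n ≠ 0) (hm : m < n) : 1 - a * q^m ≠ 0 := by
  have := qP_ne h (Nat.succ_le_of_lt hm)
  rw [Nat.succ_eq_add_one, qP_succ] at this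
  exact right_ne_zero_of_mul this

noncomputable def saalT (q D E x : ℂ) (N j : ℕ) : ℂ :=
  qPoch D q j * qPoch E q j * qPoch x q (N-j) * x^j /
    (qPoch q q j * qPoch q q (N-j) * qPoch (D*E*x) q j)

theorem saal_partial (q D E x : ℂ) (N : ℕ) (hq : qPoch q q (N+1) ≠ 0)
    (hC : qPoch (D*E*x) q (N+1) ≠ 0) (m : ℕ) (hm : m ≤ N) :
    ∑ j ∈ Finset.range (m+1), ((1 - q * q^N) * (1 - D*E*x*q^N) * saalT q D E x (N+1) j
      - (1 - E*x*q^N) * (1 - D*x*q^N) * saalT q D E x N j) =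
      - q^(N-m) * (1 - D*q^m) * (1 - E*q^m) * x * saalT q D E x N m := by
  induction m with
  | zero =>
    have h1 := qP_fac hq (Nat.lt_succ_self N)
    have h2 := qP_ne hq (Nat.le_succ N)
    simp only [saalT, zero_add, Finset.sum_range_one, qP_zero, Nat.sub_zero, qP_succ]
    field_simp
    ring
  | succ m ih =>
    rw [Finset.sum_range_succ, ih (by omega)]
    obtain ⟨t, rfl⟩ := Nat.exists_eq_add_of_le hm
    have e1 : m + 1 + t - m = t + 1 := by omega
    have e2 : m + 1 + t - (m+1) = t := by omega
    have e3 : m + 1 + t + 1 - (m+1) = t + 1 := by omega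
    have h1 := qP_fac hq (show t < _ by omega)
    have h2 := qP_ne hq (show t ≤ _ by omega)
    have h3 := qP_fac hq (show m < _ by omega)
    have h4 := qP_ne hq (show m ≤ _ by omega)
    have h5 := qP_fac hC (show m < _ by omega)
    have h6 := qP_ne hC (show m ≤ _ by omega)
    simp only [saalT, e1, e2, e3, qP_succ]
    simp only [pow_add, pow_one]
    clear ih
    generalize q^m = J at *
    generalize q^t = T at *
    obtain ⟨u, hu⟩ : ∃ u, u = 1 - q * T := ⟨_, rfl⟩
    obtain ⟨v, hv⟩ : ∃ v, v = 1 - q * J := ⟨_, rfl⟩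
    obtain ⟨w, hw⟩ : ∃ w, w = 1 - D * E * x * J := ⟨_, rfl⟩
    rw [← hu] at h1 ⊢
    rw [← hv] at h3 ⊢
    rw [← hw] at h5 ⊢
    field_simp
    rw [hu, hv, hw]
    ring

theorem saal (q D E x : ℂ) (N : ℕ) (hq : qPoch q q N ≠ 0)
    (hC : qPoch (D*E*x) q N ≠ 0) :
    ∑ j ∈ Finset.range (N+1), saalT q D E x N j =
      qPoch (E*x) q N * qPoch (D*x) q N / (qPoch q q N * qPoch (D*E*x) q N) := by
  induction N with
  | zero => simp [saalT, qP_zero]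
  | succ N ih =>
    have h1 := qP_fac hq (Nat.lt_succ_self N)
    have h2 := qP_ne hq (Nat.le_succ N)
    have h3 := qP_fac hC (Nat.lt_succ_self N)
    have h4 := qP_ne hC (Nat.le_succ N)
    have ih := ih h2 h4
    have hp := saal_partial q D E x N hq hC N le_rfl
    rw [Finset.sum_sub_distrib, ← Finset.mul_sum, ← Finset.mul_sum, ih] at hp
    have hl : (1 - q * q^N) * (1 - D*E*x*q^N) * saalT q D E x (N+1) (N+1) =
        (1 - D*q^N) * (1 - E*q^N) * x * saalT q D E x N N := by
      simp only [saalT, Nat.sub_self, qP_succ, qP_zero, pow_succ]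
      clear hp ih
      generalize 1 - q * q^N = v at *
      generalize 1 - D*E*x*q^N = w at *
      generalize qPoch (D*E*x) q N = z at *
      field_simp
    rw [Finset.sum_range_succ]
    have : (1 - q * q^N) * (1 - D*E*x*q^N) * (∑ j ∈ Finset.range (N+1), saalT q D E x (N+1) j
        + saalT q D E x (N+1) (N+1)) = (1 - E*x*q^N) * (1 - D*x*q^N) *
        (qPoch (E*x) q N * qPoch (D*x) q N / (qPoch q q N * qPoch (D*E*x) q N)) := by
      rw [mul_add, hl]
      simp only [Nat.sub_self, pow_zero] at hp
      linear_combination hp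
    have h5 := mul_ne_zero h1 h3
    apply mul_left_cancel₀ h5
    rw [this]
    simp only [qP_succ]
    clear hp ih hl this
    generalize 1 - q * q^N = v at *
    generalize 1 - D*E*x*q^N = w at *
    generalize qPoch (D*E*x) q N = z at *
    field_simp

theorem bailey (q u d e x : ℂ) (hu : d * e * x = u) (n : ℕ) (al : ℕ → ℂ)
    (hq0 : q ≠ 0)
    (hq : qPoch q q n ≠ 0) (hun : qPoch u q (2*n) ≠ 0) (hd : qPoch (e*x) q n ≠ 0)
    (he : qPoch (d*x) q n ≠ 0) :
    ∑ k ∈ Finset.range (n+1), qPoch d q k * qPoch e q k * qPoch x q (n-k) * x^k / qPoch q q (n-k) *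
      ∑ r ∈ Finset.range (k+1), al r / (qPoch q q (k-r) * qPoch u q (k+r)) =
    ∑ r ∈ Finset.range (n+1), qPoch (e*x) q n * qPoch (d*x) q n * qPoch d q r * qPoch e q r * x^r
      * al r / (qPoch (e*x) q r * qPoch (d*x) q r * qPoch q q (n-r) * qPoch u q (n+r)) := by
  simp only [Finset.mul_sum]
  rw [Finset.sum_comm' (t' := Finset.range (n+1)) (s' := fun r => Finset.Ico r (n+1))
    (by intro a b; simp only [Finset.mem_range, Finset.mem_Ico]; omega)]
  apply Finset.sum_congr rfl
  intro r hr
  obtain ⟨N, rfl⟩ := Nat.exists_eq_add_of_le (Nat.lt_succ_iff.1 (Finset.mem_range.1 hr))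
  rw [Finset.sum_Ico_eq_sum_range, show r + N + 1 - r = N + 1 by omega]
  have hu2 : d * q^r * (e * q^r) * x = u * q^(2*r) := by rw [← hu]; ring
  have hs := saal q (d*q^r) (e*q^r) x N (qP_ne hq (by omega)) (by
    have h : qPoch u q (2*r+N) ≠ 0 := qP_ne hun (by omega)
    rw [qP_add] at h
    rw [hu2]; exact right_ne_zero_of_mul h)
  have hU : qPoch u q (2*r+N) ≠ 0 := qP_ne hun (by omega)
  rw [qP_add] at hU
  have hU1 := left_ne_zero_of_mul hU
  have hU2 := right_ne_zero_of_mul hU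
  have hqN : qPoch q q N ≠ 0 := qP_ne hq (by omega)
  rw [qP_add] at hd he
  have hd1 := left_ne_zero_of_mul hd
  have he1 := left_ne_zero_of_mul he
  have hkey : ∀ j ∈ Finset.range (N+1), qPoch d q (r+j) * qPoch e q (r+j) *
      qPoch x q (r+N-(r+j)) * x^(r+j) / qPoch q q (r+N-(r+j)) *
      (al r / (qPoch q q (r+j-r) * qPoch u q (r+j+r))) =
      (qPoch d q r * qPoch e q r * x^r * al r / qPoch u q (2*r)) *
        saalT q (d*q^r) (e*q^r) x N j := by
    intro j hj
    rw [show r+N-(r+j) = N-j by omega, show r+j-r = j by omega, show r+j+r = 2*r+j by omega]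
    simp only [saalT, qP_add, hu2, pow_add]
    simp only [div_eq_mul_inv, mul_inv]
    ring
  rw [Finset.sum_congr rfl hkey, ← Finset.mul_sum, hs, hu2, show r+N-r = N by omega,
    show r+N+r = 2*r+N by omega]
  simp only [qP_add]
  rw [show e*q^r*x = e*x*q^r by ring, show d*q^r*x = d*x*q^r by ring]
  clear hkey hs
  generalize qPoch (e*x) q r = z1 at *
  generalize qPoch (d*x) q r = z2 at *
  generalize qPoch u q (2*r) = z3 at *
  generalize qPoch (u * q^(2*r)) q N = z4 at *
  generalize qPoch (d*x*q^r) q N = z5 at *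
  generalize qPoch (e*x*q^r) q N = z6 at *
  field_simp

/-- sign times triangular power -/
noncomputable def tri (q : ℂ) (k : ℕ) : ℂ := ∏ j ∈ Finset.range k, (-q^j)

theorem tri_succ (q : ℂ) (k : ℕ) : tri q (k+1) = tri q k * (-q^k) := by
  simp [tri, Finset.prod_range_succ]

theorem tri_zero (q : ℂ) : tri q 0 = 1 := by simp [tri]

theorem tri_ne (q : ℂ) (hq : q ≠ 0) (k : ℕ) : tri q k ≠ 0 := by
  simp [tri, Finset.prod_ne_zero_iff, hq]

theorem qP_shift (a q : ℂ) (k : ℕ) : qPoch a q (k+1) = (1 - a) * qPoch (a*q) q k := by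
  rw [add_comm, qP_add]; simp [qP_succ, qP_zero]

noncomputable def al0 (q a : ℂ) (r : ℕ) : ℂ :=
  tri q r * (1 - a * q^(2*r)) * qPoch a q r / ((1-a) * qPoch q q r)

theorem unit_partial (q a : ℂ) (n : ℕ) (ha : a ≠ 1) (hq : qPoch q q (n+1) ≠ 0)
    (hu : qPoch (a*q) q (2*(n+1)) ≠ 0) (m : ℕ) (hm : m ≤ n+1) :
    ∑ r ∈ Finset.range (m+1), al0 q a r / (qPoch q q (n+1-r) * qPoch (a*q) q (n+1+r)) =
      tri q m * q^m * qPoch (a*q) q m * (1 - q^(n+1-m)) /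
        (qPoch q q m * qPoch q q (n+1-m) * qPoch (a*q) q (n+1+m) * (1 - q^(n+1))) := by
  have ha' : 1 - a ≠ 0 := sub_ne_zero.2 ha.symm
  have hq1 := qP_fac hq (Nat.lt_succ_self n)
  have hq1' : 1 - q^(n+1) ≠ 0 := by rw [pow_succ']; exact hq1
  induction m with
  | zero =>
    have h1 := qP_ne hu (show n+1 ≤ _ by omega)
    simp [al0, tri_zero, qP_zero]
    field_simp
  | succ m ih =>
    rw [Finset.sum_range_succ, ih (by omega)]
    obtain ⟨t, ht⟩ := Nat.exists_eq_add_of_le hm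
    have hn : n = m + t := by omega
    subst hn
    have e1 : m + t + 1 - m = t + 1 := by omega
    have e2 : m + t + 1 - (m+1) = t := by omega
    have h1 := qP_fac hq (show t < _ by omega)
    have h2 := qP_ne hq (show t ≤ _ by omega)
    have h3 := qP_fac hq (show m < _ by omega)
    have h4 := qP_ne hq (show m ≤ _ by omega)
    have h5 := qP_fac hu (show m + t + 1 + m < _ by omega)
    have h6 := qP_ne hu (show m + t + 1 + m ≤ _ by omega)
    rw [show m + t + 1 + (m+1) = m + t + 1 + m + 1 by omega, e1, e2, al0, qP_shift a]
    simp only [qP_succ, tri_succ]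
    clear ih
    generalize qPoch (a*q) q (m+t+1+m) = U at *
    generalize qPoch (a*q) q m = V at *
    obtain ⟨v1, w1⟩ : ∃ v, v = 1 - q * q^t := ⟨_, rfl⟩
    obtain ⟨v2, w2⟩ : ∃ v, v = 1 - q * q^m := ⟨_, rfl⟩
    obtain ⟨v3, w3⟩ : ∃ v, v = 1 - a * q * q^(m+t+1+m) := ⟨_, rfl⟩
    obtain ⟨v4, w4⟩ : ∃ v, v = 1 - q^(m+t+1) := ⟨_, rfl⟩
    rw [← w1] at h1 ⊢
    rw [← w2] at h3 ⊢
    rw [← w3] at h5 ⊢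
    rw [← w4] at hq1' ⊢
    field_simp
    rw [w1, w2, w3, w4]
    simp only [pow_add, pow_one, mul_add, two_mul]
    ring

theorem unit_sum (q a : ℂ) (n : ℕ) (ha : a ≠ 1) (hq : qPoch q q n ≠ 0)
    (hu : qPoch (a*q) q (2*n) ≠ 0) :
    ∑ r ∈ Finset.range (n+1), al0 q a r / (qPoch q q (n-r) * qPoch (a*q) q (n+r)) =
      if n = 0 then 1 else 0 := by
  have ha' : 1 - a ≠ 0 := sub_ne_zero.2 ha.symm
  cases n with
  | zero => simp [al0, tri_zero, qP_zero, ha']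
  | succ n => rw [unit_partial q a n ha hq hu (n+1) le_rfl]; simp

noncomputable def al1 (q a b c x : ℂ) (r : ℕ) : ℂ :=
  qPoch b q r * qPoch c q r * x^r * al0 q a r / (qPoch (c*x) q r * qPoch (b*x) q r)

theorem beta1 (q a b c x : ℂ) (n : ℕ) (hx : b * c * x = a * q) (ha : a ≠ 1) (hq0 : q ≠ 0)
    (hq : qPoch q q n ≠ 0) (hu : qPoch (a*q) q (2*n) ≠ 0) (hb : qPoch (c*x) q n ≠ 0)
    (hc : qPoch (b*x) q n ≠ 0) :
    ∑ r ∈ Finset.range (n+1), al1 q a b c x r / (qPoch q q (n-r) * qPoch (a*q) q (n+r)) =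
      qPoch x q n / (qPoch q q n * qPoch (c*x) q n * qPoch (b*x) q n) := by
  have h := bailey q (a*q) b c x hx n (al0 q a) hq0 hq hu hb hc
  rw [Finset.sum_congr rfl (g := fun k => qPoch b q k * qPoch c q k * qPoch x q (n-k) * x^k /
    qPoch q q (n-k) * if k = 0 then 1 else 0) (by
      intro k hk
      have hk := Finset.mem_range.1 hk
      rw [unit_sum q a k ha (qP_ne hq (by omega)) (qP_ne hu (by omega))])] at h
  simp only [mul_ite, mul_one, mul_zero, Finset.sum_ite_eq', Finset.mem_range, Nat.succ_pos,
    if_true, qP_zero, Nat.sub_zero, pow_zero, one_mul] at h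
  have h2 : qPoch x q n / (qPoch q q n * qPoch (c*x) q n * qPoch (b*x) q n) =
      (qPoch x q n / qPoch q q n) / (qPoch (c*x) q n * qPoch (b*x) q n) := by
    field_simp
  rw [h2, h, eq_div_iff (mul_ne_zero hb hc), Finset.sum_mul]
  apply Finset.sum_congr rfl
  intro r hr
  rw [al1]
  simp only [div_eq_mul_inv, mul_inv]
  ring

/-- reversal -/
theorem rev (q x : ℂ) (hq : q ≠ 0) (hx : x ≠ 0) (n k : ℕ) (hk : k ≤ n) :
    qPoch (q * q^(-(n:ℤ)) / x) q k * qPoch x q (n-k) * (x * q^n / q)^k =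
      qPoch x q n * tri q k := by
  induction k with
  | zero => simp [qP_zero, tri_zero]
  | succ k ih =>
    have ih := ih (by omega)
    obtain ⟨t, rfl⟩ := Nat.exists_eq_add_of_le hk
    rw [show k + 1 + t - k = t + 1 by omega, qP_succ x] at ih
    rw [show k + 1 + t - (k+1) = t by omega, tri_succ, ← mul_assoc, ← ih, qP_succ, pow_succ]
    have : (1 - q * q^(-((k+1+t:ℕ):ℤ)) / x * q^k) * (x * q^(k+1+t) / q) =
        (1 - x*q^t) * (-q^k) := by
      rw [zpow_neg, zpow_natCast]
      simp only [pow_add, pow_one]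
      field_simp
      ring
    linear_combination (qPoch (q * q^(-((k+1+t:ℕ):ℤ)) / x) q k * qPoch x q t *
      (x * q^(k+1+t) / q)^k) * this

theorem watson_generic (q a b c d e : ℂ) (n : ℕ)
    (hq : q ≠ 0) (ha1 : a ≠ 1) (ha : a ≠ 0)
    (hb : b ≠ 0) (hc : c ≠ 0) (hd : d ≠ 0) (he : e ≠ 0)
    (hden : ∀ k ≤ n, qPoch q q k ≠ 0 ∧ qPoch (a * q / b) q k ≠ 0 ∧
      qPoch (a * q / c) q k ≠ 0 ∧ qPoch (a * q / d) q k ≠ 0 ∧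
      qPoch (a * q / e) q k ≠ 0 ∧ qPoch (a * q ^ (n + 1)) q k ≠ 0 ∧
      qPoch (d * e * q ^ (-(n : ℤ)) / a) q k ≠ 0)
    (hu : qPoch (a*q) q (2*n) ≠ 0) :
    ∑ k ∈ Finset.range (n + 1),
        (1 - a * q ^ (2 * k)) / (1 - a) *
          (qPoch a q k * qPoch b q k * qPoch c q k * qPoch d q k * qPoch e q k *
              qPoch (q ^ (-(n : ℤ))) q k /
            (qPoch q q k * qPoch (a * q / b) q k * qPoch (a * q / c) q k *
              qPoch (a * q / d) q k * qPoch (a * q / e) q k *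
                qPoch (a * q ^ (n + 1)) q k)) *
          (a ^ 2 * q ^ (2 + n) / (b * c * d * e)) ^ k =
      qPoch (a * q) q n * qPoch (a * q / (d * e)) q n /
          (qPoch (a * q / d) q n * qPoch (a * q / e) q n) *
        ∑ k ∈ Finset.range (n + 1),
          qPoch (q ^ (-(n : ℤ))) q k * qPoch d q k * qPoch e q k *
              qPoch (a * q / (b * c)) q k /
            (qPoch q q k * qPoch (a * q / b) q k * qPoch (a * q / c) q k *
              qPoch (d * e * q ^ (-(n : ℤ)) / a) q k) * q ^ k := by
  obtain ⟨x, hx⟩ : ∃ x, x = a * q / (d * e) := ⟨_, rfl⟩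
  obtain ⟨y, hy⟩ : ∃ y, y = a * q / (b * c) := ⟨_, rfl⟩
  have hx0 : x ≠ 0 := by rw [hx]; positivity
  have hy0 : y ≠ 0 := by rw [hy]; positivity
  have hx1 : d * e * x = a * q := by rw [hx]; field_simp
  have hy1 : b * c * y = a * q := by rw [hy]; field_simp
  have e1 : a * q / b = c * y := by rw [hy]; field_simp
  have e2 : a * q / c = b * y := by rw [hy]; field_simp
  have e3 : a * q / d = e * x := by rw [hx]; field_simp
  have e4 : a * q / e = d * x := by rw [hx]; field_simp
  have e5 : d * e * q ^ (-(n:ℤ)) / a = q * q^(-(n:ℤ)) / x := by rw [hx]; field_simp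
  have e6 : a ^ 2 * q ^ (2 + n) / (b * c * d * e) = x * y * q^n := by
    rw [hx, hy, pow_add]; field_simp
  have e7 : q ^ (-(n:ℤ)) = q * q^(-(n:ℤ)) / q := by field_simp
  have ha' : 1 - a ≠ 0 := sub_ne_zero.2 ha1.symm
  have hqn := (hden n le_rfl).1
  have hun : qPoch (a*q) q n ≠ 0 := qP_ne hu (by omega)
  rw [← hx, ← hy, e1, e2, e3, e4, e5, e6]
  rw [e1, e2, e3, e4, e5] at hden
  obtain ⟨-, k1, k2, k3, k4, -, k5⟩ := hden n le_rfl
  have hB := bailey q (a*q) d e x hx1 n (al1 q a b c y) hq hqn hu k3 k4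
  rw [Finset.sum_congr rfl (g := fun k => qPoch d q k * qPoch e q k * qPoch x q (n-k) * x^k /
    qPoch q q (n-k) * (qPoch y q k / (qPoch q q k * qPoch (c*y) q k * qPoch (b*y) q k))) (by
      intro k hk
      have hk := Finset.mem_range.1 hk
      rw [beta1 q a b c y k hy1 ha1 hq (qP_ne hqn (by omega)) (qP_ne hu (by omega))
        (qP_ne k1 (by omega)) (qP_ne k2 (by omega))])] at hB
  have hL : ∀ k ∈ Finset.range (n+1), (1 - a * q ^ (2 * k)) / (1 - a) *
          (qPoch a q k * qPoch b q k * qPoch c q k * qPoch d q k * qPoch e q k *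
              qPoch (q ^ (-(n : ℤ))) q k /
            (qPoch q q k * qPoch (c*y) q k * qPoch (b*y) q k *
              qPoch (e*x) q k * qPoch (d*x) q k *
                qPoch (a * q ^ (n + 1)) q k)) *
          (x * y * q^n) ^ k = qPoch (a*q) q n * qPoch q q n / (qPoch (e*x) q n * qPoch (d*x) q n) *
        (qPoch (e*x) q n * qPoch (d*x) q n * qPoch d q k * qPoch e q k * x^k
      * al1 q a b c y k / (qPoch (e*x) q k * qPoch (d*x) q k * qPoch q q (n-k) *
        qPoch (a*q) q (n+k))) := by
    intro k hk
    have hk := Nat.lt_succ_iff.1 (Finset.mem_range.1 hk)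
    have hr := rev q q hq hq n k hk
    rw [← e7, show q * q^n / q = q^n by field_simp] at hr
    obtain ⟨j0, j1, j2, j3, j4, j5, j6⟩ := hden k hk
    have hqk : qPoch q q (n-k) ≠ 0 := qP_ne hqn (by omega)
    rw [qP_add, show a * q * q^n = a * q^(n+1) by ring, al1, al0, mul_pow, mul_pow]
    clear hB hden
    generalize qPoch (q ^ (-(n : ℤ))) q k = Z at *
    generalize qPoch (e*x) q k = z1 at *
    generalize qPoch (d*x) q k = z2 at *
    generalize qPoch (c*y) q k = z3 at *
    generalize qPoch (b*y) q k = z4 at *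
    generalize qPoch (e*x) q n = z5 at *
    generalize qPoch (d*x) q n = z6 at *
    generalize qPoch (a*q) q n = z7 at *
    generalize qPoch (a*q^(n+1)) q k = z8 at *
    generalize qPoch q q k = z9 at *
    generalize (q^n)^k = z10 at *
    generalize 1 - a * q^(2*k) = z11 at *
    field_simp
    linear_combination z11 * qPoch a q k * qPoch b q k * qPoch c q k * qPoch d q k * qPoch e q k * hr
  have hxn : qPoch x q n ≠ 0 := by
    have hr := rev q x hq hx0 n n le_rfl
    intro h
    rw [h, zero_mul, Nat.sub_self, qP_zero, mul_one] at hr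
    exact mul_ne_zero k5 (by positivity) hr
  have hR : ∀ k ∈ Finset.range (n+1), qPoch (q ^ (-(n : ℤ))) q k * qPoch d q k * qPoch e q k *
              qPoch y q k /
            (qPoch q q k * qPoch (c*y) q k * qPoch (b*y) q k *
              qPoch (q * q ^ (-(n : ℤ)) / x) q k) * q ^ k =
       qPoch q q n / qPoch x q n * (qPoch d q k * qPoch e q k * qPoch x q (n-k) * x^k /
    qPoch q q (n-k) * (qPoch y q k / (qPoch q q k * qPoch (c*y) q k * qPoch (b*y) q k))) := by
    intro k hk
    have hk := Nat.lt_succ_iff.1 (Finset.mem_range.1 hk)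
    have hr := rev q q hq hq n k hk
    rw [← e7, show q * q^n / q = q^n by field_simp] at hr
    have hr2 := rev q x hq hx0 n k hk
    rw [div_pow, mul_pow] at hr2
    obtain ⟨j0, j1, j2, j3, j4, j5, j6⟩ := hden k hk
    have hqk : qPoch q q (n-k) ≠ 0 := qP_ne hqn (by omega)
    have ht := tri_ne q hq k
    have hqk2 : q^k ≠ 0 := pow_ne_zero _ hq
    clear hB hden hL
    generalize qPoch (q ^ (-(n : ℤ))) q k = Z at *
    generalize qPoch (q * q ^ (-(n : ℤ)) / x) q k = W at *
    generalize qPoch (c*y) q k = z3 at *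
    generalize qPoch (b*y) q k = z4 at *
    generalize qPoch x q n = z5 at *
    generalize qPoch q q n = z6 at *
    generalize qPoch x q (n-k) = z7 at *
    generalize qPoch q q (n-k) = z8 at *
    generalize qPoch q q k = z9 at *
    generalize (q^n)^k = z10 at *
    generalize tri q k = z11 at *
    generalize q^k = z12 at *
    have hmain : Z * z12 * z5 * z8 = z6 * z7 * x^k * W := by
      apply mul_right_cancel₀ ht
      have hr3 : W * z7 * x^k * z10 = z5 * z11 * z12 := by
        rw [← hr2]; field_simp
      linear_combination W * z7 * x^k * hr - Z * z8 * hr3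
    field_simp
    linear_combination qPoch d q k * qPoch e q k * qPoch y q k * hmain
  rw [Finset.sum_congr rfl hL, Finset.sum_congr rfl hR, ← Finset.mul_sum, ← Finset.mul_sum, ← hB]
  field_simp

theorem qP_cont {f : ℂ → ℂ} {a : ℂ} (hf : ContinuousAt f a) (q : ℂ) (k : ℕ) :
    ContinuousAt (fun t => qPoch (f t) q k) a := by
  unfold qPoch
  fun_prop

theorem ev_generic (q a : ℂ) (hq : q ≠ 0) (m : ℕ) :
    ∀ᶠ t in nhdsWithin a {a}ᶜ, qPoch (t*q) q m ≠ 0 := by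
  induction m with
  | zero => simp [qP_zero]
  | succ m ih =>
    have h : ∀ᶠ t in nhdsWithin a {a}ᶜ, t ≠ (q * q^m)⁻¹ := by
      by_cases h : a = (q * q^m)⁻¹
      · rw [← h]; exact self_mem_nhdsWithin
      · exact (eventually_ne_nhds h).filter_mono nhdsWithin_le_nhds
    filter_upwards [ih, h] with t h1 h2
    rw [qP_succ]
    refine mul_ne_zero h1 (fun h3 => h2 ?_)
    have : q * q^m ≠ 0 := by positivity
    apply eq_inv_of_mul_eq_one_left
    linear_combination -h3

/-- Watson's transformation of a terminating very-well-poised ₈φ₇ series into a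
terminating balanced ₄φ₃ series, assuming nonzero denominator factors. -/
theorem watson_transformation (q a b c d e : ℂ) (n : ℕ)
    (hq : q ≠ 0) (ha1 : a ≠ 1) (ha : a ≠ 0)
    (hb : b ≠ 0) (hc : c ≠ 0) (hd : d ≠ 0) (he : e ≠ 0)
    (hden : ∀ k ≤ n, qPoch q q k ≠ 0 ∧ qPoch (a * q / b) q k ≠ 0 ∧
      qPoch (a * q / c) q k ≠ 0 ∧ qPoch (a * q / d) q k ≠ 0 ∧
      qPoch (a * q / e) q k ≠ 0 ∧ qPoch (a * q ^ (n + 1)) q k ≠ 0 ∧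
      qPoch (d * e * q ^ (-(n : ℤ)) / a) q k ≠ 0) :
    ∑ k ∈ Finset.range (n + 1),
        (1 - a * q ^ (2 * k)) / (1 - a) *
          (qPoch a q k * qPoch b q k * qPoch c q k * qPoch d q k * qPoch e q k *
              qPoch (q ^ (-(n : ℤ))) q k /
            (qPoch q q k * qPoch (a * q / b) q k * qPoch (a * q / c) q k *
              qPoch (a * q / d) q k * qPoch (a * q / e) q k *
                qPoch (a * q ^ (n + 1)) q k)) *
          (a ^ 2 * q ^ (2 + n) / (b * c * d * e)) ^ k =
      qPoch (a * q) q n * qPoch (a * q / (d * e)) q n /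
          (qPoch (a * q / d) q n * qPoch (a * q / e) q n) *
        ∑ k ∈ Finset.range (n + 1),
          qPoch (q ^ (-(n : ℤ))) q k * qPoch d q k * qPoch e q k *
              qPoch (a * q / (b * c)) q k /
            (qPoch q q k * qPoch (a * q / b) q k * qPoch (a * q / c) q k *
              qPoch (d * e * q ^ (-(n : ℤ)) / a) q k) * q ^ k := by
  
  have ha' : 1 - a ≠ 0 := sub_ne_zero.2 ha1.symm
  have hid : ContinuousAt (fun t : ℂ => t) a := continuousAt_id
  have c1 : ∀ z : ℂ, ContinuousAt (fun t : ℂ => t * q / z) a := fun z => by fun_prop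
  have c2 : ContinuousAt (fun t : ℂ => t * q ^ (n+1)) a := by fun_prop
  have c3 : ContinuousAt (fun t : ℂ => d * e * q ^ (-(n:ℤ)) / t) a :=
    continuousAt_const.div hid ha
  have c4 : ContinuousAt (fun t : ℂ => t * q) a := by fun_prop
  refine tendsto_nhds_unique_of_eventuallyEq (l := nhdsWithin a {a}ᶜ)
    (f := fun a : ℂ => ∑ k ∈ Finset.range (n + 1),
        (1 - a * q ^ (2 * k)) / (1 - a) *
          (qPoch a q k * qPoch b q k * qPoch c q k * qPoch d q k * qPoch e q k *
              qPoch (q ^ (-(n : ℤ))) q k /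
            (qPoch q q k * qPoch (a * q / b) q k * qPoch (a * q / c) q k *
              qPoch (a * q / d) q k * qPoch (a * q / e) q k *
                qPoch (a * q ^ (n + 1)) q k)) *
          (a ^ 2 * q ^ (2 + n) / (b * c * d * e)) ^ k)
    (g := fun a : ℂ => qPoch (a * q) q n * qPoch (a * q / (d * e)) q n /
          (qPoch (a * q / d) q n * qPoch (a * q / e) q n) *
        ∑ k ∈ Finset.range (n + 1),
          qPoch (q ^ (-(n : ℤ))) q k * qPoch d q k * qPoch e q k *
              qPoch (a * q / (b * c)) q k /
            (qPoch q q k * qPoch (a * q / b) q k * qPoch (a * q / c) q k *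
              qPoch (d * e * q ^ (-(n : ℤ)) / a) q k) * q ^ k) ?_ ?_ ?_
  · refine Filter.Tendsto.mono_left ?_ nhdsWithin_le_nhds
    refine tendsto_finsetSum _ (fun k hk => ?_)
    obtain ⟨j0, j1, j2, j3, j4, j5, j6⟩ := hden k (Nat.lt_succ_iff.1 (Finset.mem_range.1 hk))
    refine ContinuousAt.mul (ContinuousAt.mul (ContinuousAt.div (by fun_prop) (by fun_prop) ha')
      (ContinuousAt.div ?_ ?_ ?_)) (by fun_prop)
    · exact (((((qP_cont hid q k).mul continuousAt_const).mul continuousAt_const).mul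
        continuousAt_const).mul continuousAt_const).mul continuousAt_const
    · exact ((((continuousAt_const.mul (qP_cont (c1 b) q k)).mul (qP_cont (c1 c) q k)).mul
        (qP_cont (c1 d) q k)).mul (qP_cont (c1 e) q k)).mul (qP_cont c2 q k)
    · simp only [ne_eq, mul_eq_zero, not_or]
      exact ⟨⟨⟨⟨⟨j0, j1⟩, j2⟩, j3⟩, j4⟩, j5⟩
  · refine Filter.Tendsto.mono_left ?_ nhdsWithin_le_nhds
    obtain ⟨-, -, -, k3, k4, -, -⟩ := hden n le_rfl
    refine Filter.Tendsto.mul (ContinuousAt.div ((qP_cont c4 q n).mul (qP_cont (c1 (d*e)) q n))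
      ((qP_cont (c1 d) q n).mul (qP_cont (c1 e) q n)) (mul_ne_zero k3 k4)) ?_
    refine tendsto_finsetSum _ (fun k hk => ?_)
    obtain ⟨j0, j1, j2, j3, j4, j5, j6⟩ := hden k (Nat.lt_succ_iff.1 (Finset.mem_range.1 hk))
    refine ContinuousAt.mul (ContinuousAt.div (continuousAt_const.mul (qP_cont (c1 (b*c)) q k))
      (((continuousAt_const.mul (qP_cont (c1 b) q k)).mul (qP_cont (c1 c) q k)).mul
        (qP_cont c3 q k)) ?_) continuousAt_const
    simp only [ne_eq, mul_eq_zero, not_or]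
    exact ⟨⟨⟨j0, j1⟩, j2⟩, j6⟩
  · obtain ⟨k0, k1, k2, k3, k4, k5, k6⟩ := hden n le_rfl
    have w : ∀ {p : ℂ → Prop}, (∀ᶠ t in nhds a, p t) → ∀ᶠ t in nhdsWithin a {a}ᶜ, p t :=
      fun h => h.filter_mono nhdsWithin_le_nhds
    filter_upwards [ev_generic q a hq (2*n), w (eventually_ne_nhds ha1), w (eventually_ne_nhds ha),
      w ((qP_cont (c1 b) q n).eventually_ne k1), w ((qP_cont (c1 c) q n).eventually_ne k2),
      w ((qP_cont (c1 d) q n).eventually_ne k3), w ((qP_cont (c1 e) q n).eventually_ne k4),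
      w ((qP_cont c2 q n).eventually_ne k5), w ((qP_cont c3 q n).eventually_ne k6)]
      with t t0 t1 t2 t3 t4 t5 t6 t7 t8
    exact watson_generic q t b c d e n hq t1 t2 hb hc hd he (fun k hk =>
      ⟨qP_ne k0 hk, qP_ne t3 hk, qP_ne t4 hk, qP_ne t5 hk, qP_ne t6 hk, qP_ne t7 hk,
        qP_ne t8 hk⟩) t0
end

section
/- (Jackson's summation of a terminating very-well-poised balanced ₈φ₇) Let q, a, b, c, d, e be complex numbers and n a nonnegative integer satisfying a² q^{n+1} = b c d e, with all denominator factors below nonzero. Then ∑_{k=0}^{n} ((1 - a q^{2k})/(1 - a)) · ((a;q)_k (b;q)_k (c;q)_k (d;q)_k (e;q)_k (q^{-n};q)_k / ((q;q)_k (aq/b;q)_k (aq/c;q)_k (aq/d;q)_k (aq/e;q)_k (aq^{n+1};q)_k)) q^k = (aq;q)_n (aq/(bc);q)_n (aq/(bd);q)_n (aq/(cd);q)_n / ((aq/b;q)_n (aq/c;q)_n (aq/d;q)_n (aq/(bcd);q)_n). -/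
set_option maxHeartbeats 4000000 in
set_option maxRecDepth 100000 in
lemma core (a b c d p u : ℂ) (ha : a ≠ 0) (hb : b ≠ 0) (hc : c ≠ 0) (hd : d ≠ 0) (hp : p ≠ 0)
  (h1 : 1 - a ≠ 0) (h2 : b*c*d - a^2*p ≠ 0) (h3 : a * p - b*c*d ≠ 0)
  (h5 : 1 - a*p*u ≠ 0) (h6 : p - 1 ≠ 0) (h7 : b - a*p ≠ 0) (h8 : c - a*p ≠ 0) (h9 : d - a*p ≠ 0) :
  (1 - a*u^2)/(1-a)*u*((1-a^2*p/(b*c*d)*u)/(1-a^2*p/(b*c*d)) * ((1-b*c*d/(a*p)*u)/(1-b*c*d/(a*p)))*((1-a*p)/(1-a*p*u))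
    - ((1-a*p)*(1-a*p/(b*c))*(1-a*p/(b*d))*(1-a*p/(c*d))/((1-a*p/b)*(1-a*p/c)*(1-a*p/d)*(1-a*p/(b*c*d)))) * ((p-u)/(p-1)))
  = (p*(1-a^2*p/(b*c*d)*p)*(1-a*p)/((1-a^2*p/(b*c*d))*(1-b*c*d/(a*p))*(1-a*p/b)*(1-a*p/c)*(1-a*p/d)*(p-1)*(1-a))) *
   ((1-a*u)*(1-b*u)*(1-c*u)*(1-d*u)*(1-a^2*p/(b*c*d)*u)*(1-u/p)/(1-a*p*u) -
    (1-u)*(1-a*u/b)*(1-a*u/c)*(1-a*u/d)*(1-b*c*d/(a*p)*u)) := by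
  have e2 : 1-a^2*p/(b*c*d) = (b*c*d - a^2*p)/(b*c*d) := by field_simp
  have e3 : 1-b*c*d/(a*p) = (a*p-b*c*d)/(a*p) := by field_simp
  have e4 : 1-a*p/(b*c*d) = -(a*p-b*c*d)/(b*c*d) := by field_simp; ring
  have e7 : 1-a*p/b = (b - a*p)/b := by field_simp
  have e8 : 1-a*p/c = (c - a*p)/c := by field_simp
  have e9 : 1-a*p/d = (d - a*p)/d := by field_simp
  rw [e2,e3,e4,e7,e8,e9]
  obtain ⟨v, hv⟩ : ∃ v, v = 1-a*p*u := ⟨_, rfl⟩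
  rw [← hv] at h5 ⊢
  field_simp
  rw [hv]
  ring

lemma qPoch_zero (x q : ℂ) : qPoch x q 0 = 1 := by simp [qPoch]

lemma qPoch_succ (x q : ℂ) (k : ℕ) : qPoch x q (k+1) = qPoch x q k * (1 - x * q^k) := by
  simp [qPoch, Finset.prod_range_succ]

lemma qPoch_shift (x q : ℂ) (k : ℕ) : qPoch (x*q) q k * (1 - x) = qPoch x q k * (1 - x * q^k) := by
  rw [← qPoch_succ]
  simp only [qPoch]
  rw [Finset.prod_range_succ']
  simp only [pow_zero, mul_one, pow_succ']
  congr 1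
  apply Finset.prod_congr rfl
  intros; ring

lemma qPoch_ne (x q : ℂ) (k : ℕ) (h : ∀ j < k, 1 - x * q^j ≠ 0) : qPoch x q k ≠ 0 := by
  rw [qPoch, Finset.prod_ne_zero_iff]
  intro j hj
  exact h j (Finset.mem_range.1 hj)

noncomputable def TT (q a b c d e : ℂ) (n k : ℕ) : ℂ :=
  (1 - a * q ^ (2 * k)) / (1 - a) *
          (qPoch a q k * qPoch b q k * qPoch c q k * qPoch d q k * qPoch e q k *
              qPoch (q ^ (-(n : ℤ))) q k /
            (qPoch q q k * qPoch (a * q / b) q k * qPoch (a * q / c) q k *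
              qPoch (a * q / d) q k * qPoch (a * q / e) q k *
                qPoch (a * q ^ (n + 1)) q k)) * q ^ k

noncomputable def RR (q a b c d : ℂ) (n : ℕ) : ℂ :=
  qPoch (a * q) q n * qPoch (a * q / (b * c)) q n * qPoch (a * q / (b * d)) q n *
          qPoch (a * q / (c * d)) q n /
        (qPoch (a * q / b) q n * qPoch (a * q / c) q n * qPoch (a * q / d) q n *
          qPoch (a * q / (b * c * d)) q n)

noncomputable def WW (q a b c d p : ℂ) (k : ℕ) : ℂ :=
  qPoch a q k * qPoch b q k * qPoch c q k * qPoch d q k * qPoch (a^2*p/(b*c*d)) q k *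
    qPoch p⁻¹ q k / (qPoch q q k * qPoch (a * q / b) q k * qPoch (a * q / c) q k *
              qPoch (a * q / d) q k * qPoch (b*c*d/(a*p)*q) q k * qPoch (a * p) q k)

noncomputable def rho (a b c d p : ℂ) : ℂ :=
  (1-a*p)*(1-a*p/(b*c))*(1-a*p/(b*d))*(1-a*p/(c*d))/((1-a*p/b)*(1-a*p/c)*(1-a*p/d)*(1-a*p/(b*c*d)))

noncomputable def KK (a b c d p : ℂ) : ℂ :=
  (p*(1-a^2*p/(b*c*d)*p)*(1-a*p)/((1-a^2*p/(b*c*d))*(1-b*c*d/(a*p))*(1-a*p/b)*(1-a*p/c)*(1-a*p/d)*(p-1)*(1-a)))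

/-- genericity -/
structure Gen (q a b c d : ℂ) : Prop where
  ha : a ≠ 0
  h1 : ∀ j : ℕ, a * q^j ≠ 1
  hB : ∀ j : ℕ, a * q^j ≠ b
  hC : ∀ j : ℕ, a * q^j ≠ c
  hD : ∀ j : ℕ, a * q^j ≠ d
  hE : ∀ j : ℤ, a * q^j ≠ b*c*d
  hF : ∀ j : ℕ, a^2 * q^j ≠ b*c*d

lemma denom_aux {a b q : ℂ} (hb : b ≠ 0) (hB : ∀ j : ℕ, a * q^j ≠ b) (j : ℕ) :
    1 - a * q / b * q^j ≠ 0 := by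
  intro h
  apply hB (j+1)
  field_simp at h
  rw [pow_succ]
  linear_combination -h

lemma TT_n (q a b c d : ℂ) (n k : ℕ) (hq : q ≠ 0) (ha : a ≠ 0) (hb : b ≠ 0) (hc : c ≠ 0)
    (hd : d ≠ 0) (h6 : q^(n+1) - 1 ≠ 0) :
    TT q a b c d (a^2*q^(n+1)/(b*c*d)) n k =
      (1 - a*(q^k)^2)/(1-a)*q^k*(WW q a b c d (q^(n+1)) k * ((q^(n+1)-q^k)/(q^(n+1)-1))) := by
  have hx : (q ^ (-(n : ℤ))) = (q^(n+1))⁻¹ * q := by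
    rw [zpow_neg, zpow_natCast]; field_simp; ring
  have hp : q^(n+1) ≠ 0 := pow_ne_zero _ hq
  have hy : a * q / (a^2*q^(n+1)/(b*c*d)) = b*c*d/(a*q^(n+1))*q := by field_simp
  have hs := qPoch_shift (q^(n+1))⁻¹ q k
  rw [TT, WW, hx, hy]
  have hs' : qPoch ((q^(n+1))⁻¹*q) q k = qPoch (q^(n+1))⁻¹ q k * ((q^(n+1)-q^k)/(q^(n+1)-1)) := by
    rw [mul_div_assoc', eq_div_iff h6]
    generalize q^(n+1) = p at *
    generalize qPoch (p⁻¹ * q) q k = X at *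
    generalize qPoch p⁻¹ q k = Y at *
    field_simp at hs
    linear_combination hs
  rw [hs']
  ring

lemma TT_n1 (q a b c d : ℂ) (n k : ℕ) (hq : q ≠ 0) (hb : b ≠ 0) (hc : c ≠ 0)
    (hd : d ≠ 0) (hg : Gen q a b c d) :
    TT q a b c d (a^2*q^(n+1+1)/(b*c*d)) (n+1) k =
      (1 - a*(q^k)^2)/(1-a)*q^k*(WW q a b c d (q^(n+1)) k *
       ((1-a^2*q^(n+1)/(b*c*d)*q^k)/(1-a^2*q^(n+1)/(b*c*d)) *
        ((1-b*c*d/(a*q^(n+1))*q^k)/(1-b*c*d/(a*q^(n+1))))*((1-a*q^(n+1))/(1-a*q^(n+1)*q^k)))) := by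
  have ha := hg.ha
  have hp : q^(n+1) ≠ 0 := pow_ne_zero _ hq
  have hx : (q ^ (-((n+1 : ℕ) : ℤ))) = (q^(n+1))⁻¹ := by
    rw [zpow_neg, zpow_natCast]
  have he : a^2*q^(n+1+1)/(b*c*d) = a^2*q^(n+1)/(b*c*d)*q := by ring
  have hy : a * q / (a^2*q^(n+1)/(b*c*d)*q) = b*c*d/(a*q^(n+1)) := by field_simp
  have hz : a * q^(n+1+1) = a*q^(n+1)*q := by ring
  have n1 : 1-a^2*q^(n+1)/(b*c*d) ≠ 0 := by
    intro h
    apply hg.hF (n+1)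
    field_simp at h
    linear_combination -h
  have n2' : ∀ j : ℕ, 1-b*c*d/(a*q^(n+1))*q^j ≠ 0 := by
    intro j h
    apply hg.hE ((n+1 : ℕ) - (j:ℤ))
    rw [zpow_sub₀ hq, zpow_natCast, zpow_natCast]
    field_simp at h
    field_simp
    linear_combination h
  have n2 := n2' 0
  rw [pow_zero, mul_one] at n2
  have n3' : ∀ j : ℕ, 1-a*q^(n+1)*q^j ≠ 0 := by
    intro j h
    apply hg.h1 (n+1+j)
    rw [pow_add]
    linear_combination -h
  have n3 := n3' 0
  rw [pow_zero, mul_one] at n3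
  rw [TT, WW, hx, he, hy, hz]
  have s1 : qPoch (a^2*q^(n+1)/(b*c*d)*q) q k = qPoch (a^2*q^(n+1)/(b*c*d)) q k *
     ((1-a^2*q^(n+1)/(b*c*d)*q^k)/(1-a^2*q^(n+1)/(b*c*d))) := by
    rw [mul_div_assoc', eq_div_iff n1, qPoch_shift]
  have s2 : qPoch (b*c*d/(a*q^(n+1))) q k = qPoch (b*c*d/(a*q^(n+1))*q) q k *
     (((1-b*c*d/(a*q^(n+1))*q^k)/(1-b*c*d/(a*q^(n+1)))))⁻¹ := by
    rw [inv_div, mul_div_assoc', eq_div_iff (n2' k), qPoch_shift]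
  have s3 : qPoch (a*q^(n+1)*q) q k = qPoch (a*q^(n+1)) q k *
     ((1-a*q^(n+1))/(1-a*q^(n+1)*q^k))⁻¹ := by
    rw [inv_div, mul_div_assoc', eq_div_iff n3, qPoch_shift]
  rw [s1, s2, s3]
  generalize ((1-a^2*q^(n+1)/(b*c*d)*q^k)/(1-a^2*q^(n+1)/(b*c*d))) = z1
  generalize (((1-b*c*d/(a*q^(n+1))*q^k)/(1-b*c*d/(a*q^(n+1))))) = z2
  generalize ((1-a*q^(n+1))/(1-a*q^(n+1)*q^k)) = z3
  simp only [div_eq_mul_inv, mul_inv, inv_inv]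
  ring

noncomputable def G0 (q a b c d p : ℂ) (k : ℕ) : ℂ :=
  WW q a b c d p k * (KK a b c d p * ((1-q^k)*(1-a*q^k/b)*(1-a*q^k/c)*(1-a*q^k/d)*(1-b*c*d/(a*p)*q^k)))

noncomputable def G1 (q a b c d p : ℂ) (k : ℕ) : ℂ :=
  WW q a b c d p k * (KK a b c d p *
   ((1-a*q^k)*(1-b*q^k)*(1-c*q^k)*(1-d*q^k)*(1-a^2*p/(b*c*d)*q^k)*(1-q^k/p)/(1-a*p*q^k)))

lemma step (q a b c d : ℂ) (n k : ℕ) (hq : q ≠ 0) (hb : b ≠ 0) (hc : c ≠ 0)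
    (hd : d ≠ 0) (hg : Gen q a b c d) (h6 : q^(n+1) - 1 ≠ 0) :
    TT q a b c d (a^2*q^(n+1+1)/(b*c*d)) (n+1) k
      - rho a b c d (q^(n+1)) * TT q a b c d (a^2*q^(n+1)/(b*c*d)) n k
    = G1 q a b c d (q^(n+1)) k - G0 q a b c d (q^(n+1)) k := by
  rw [TT_n1 q a b c d n k hq hb hc hd hg, TT_n q a b c d n k hq hg.ha hb hc hd h6]
  have hc := core a b c d (q^(n+1)) (q^k) hg.ha hb hc hd (pow_ne_zero _ hq)
    (by have := hg.h1 0; intro h; apply this; linear_combination -h)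
    (by have := hg.hF (n+1); intro h; apply this; linear_combination -h)
    (by have := hg.hE (n+1 : ℕ); rw [zpow_natCast] at this; intro h; apply this; linear_combination h)
    (by have := hg.h1 (n+1+k); intro h; apply this; rw [pow_add]; linear_combination -h)
    h6
    (by have := hg.hB (n+1); intro h; apply this; linear_combination -h)
    (by have := hg.hC (n+1); intro h; apply this; linear_combination -h)
    (by have := hg.hD (n+1); intro h; apply this; linear_combination -h)
  rw [G1, G0, rho, KK, ← mul_sub, ← mul_sub, ← hc]
  ring

lemma G01 (q a b c d : ℂ) (n k : ℕ) (hq : q ≠ 0) (hb : b ≠ 0) (hc : c ≠ 0)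
    (hd : d ≠ 0) (hg : Gen q a b c d) (hk : q^(k+1) ≠ 1) :
    G0 q a b c d (q^(n+1)) (k+1) = G1 q a b c d (q^(n+1)) k := by
  have ha := hg.ha
  have m1 : 1 - q*q^k ≠ 0 := by
    intro h; apply hk; rw [pow_succ]; linear_combination -h
  have m2 := denom_aux hb hg.hB k
  have m3 := denom_aux hc hg.hC k
  have m4 := denom_aux hd hg.hD k
  have m5 : 1 - b*c*d/(a*q^(n+1))*q*q^k ≠ 0 := by
    intro h
    apply hg.hE ((n+1 : ℕ) - ((k+1:ℕ):ℤ))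
    rw [zpow_sub₀ hq, zpow_natCast, zpow_natCast]
    have : b*c*d/(a*q^(n+1))*q*q^k = 1 := by linear_combination -h
    have hp : q^(n+1) ≠ 0 := pow_ne_zero _ hq
    rw [pow_succ q k]
    generalize q^(n+1) = p at *
    field_simp at this
    field_simp
    linear_combination -this
  simp only [G0, G1, WW, qPoch_succ]
  have e1 : 1 - q^(k+1) = 1 - q*q^k := by ring
  have e2 : 1 - a*q^(k+1)/b = 1 - a*q/b*q^k := by ring
  have e3 : 1 - a*q^(k+1)/c = 1 - a*q/c*q^k := by ring
  have e4 : 1 - a*q^(k+1)/d = 1 - a*q/d*q^k := by ring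
  have e5 : 1 - b*c*d/(a*q^(n+1))*q^(k+1) = 1 - b*c*d/(a*q^(n+1))*q*q^k := by ring
  have e6 : 1 - q^k/q^(n+1) = 1 - (q^(n+1))⁻¹*q^k := by ring
  rw [e1, e2, e3, e4, e5, e6]
  generalize 1 - q*q^k = z1 at *
  generalize 1 - a*q/b*q^k = z2 at *
  generalize 1 - a*q/c*q^k = z3 at *
  generalize 1 - a*q/d*q^k = z4 at *
  generalize 1 - b*c*d/(a*q^(n+1))*q*q^k = z5 at *
  have i1 := mul_inv_cancel₀ m1
  have i2 := mul_inv_cancel₀ m2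
  have i3 := mul_inv_cancel₀ m3
  have i4 := mul_inv_cancel₀ m4
  have i5 := mul_inv_cancel₀ m5
  generalize KK a b c d (q^(n+1)) = K
  generalize 1 - a*q^(n+1)*q^k = y1
  generalize 1 - (q^(n+1))⁻¹*q^k = y2
  generalize 1 - a^2*q^(n+1)/(b*c*d)*q^k = y3
  generalize qPoch (a^2*q^(n+1)/(b*c*d)) q k = Y1
  generalize qPoch (q^(n+1))⁻¹ q k = Y2
  generalize qPoch (b*c*d/(a*q^(n+1))*q) q k = Y3
  generalize qPoch (a*q^(n+1)) q k = Y4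
  generalize qPoch (a*q/b) q k = Y5
  generalize qPoch (a*q/c) q k = Y6
  generalize qPoch (a*q/d) q k = Y7
  simp only [div_eq_mul_inv, mul_inv]
  calc _ = (qPoch a q k * qPoch b q k * qPoch c q k * qPoch d q k * Y1 * Y2 *
      ((qPoch q q k)⁻¹ * Y5⁻¹ * Y6⁻¹ * Y7⁻¹ * Y3⁻¹ * Y4⁻¹) * (K * ((1 - a * q ^ k) *
      (1 - b * q ^ k) * (1 - c * q ^ k) * (1 - d * q ^ k) * y3 * y2 * y1⁻¹))) *
      ((z1*z1⁻¹)*(z2*z2⁻¹)*(z3*z3⁻¹)*(z4*z4⁻¹)*(z5*z5⁻¹)) := by ring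
    _ = _ := by rw [i1, i2, i3, i4, i5]; ring

lemma partialSum (q a b c d : ℂ) (n m : ℕ) (hq : q ≠ 0) (hb : b ≠ 0) (hc : c ≠ 0)
    (hd : d ≠ 0) (hg : Gen q a b c d) (hQ : ∀ j, j ≤ n → q^(j+1) ≠ 1) (hm : m ≤ n+1) :
    ∑ k ∈ Finset.range (m+1), (TT q a b c d (a^2*q^(n+1+1)/(b*c*d)) (n+1) k
      - rho a b c d (q^(n+1)) * TT q a b c d (a^2*q^(n+1)/(b*c*d)) n k)
    = G1 q a b c d (q^(n+1)) m := by
  have h6 : q^(n+1) - 1 ≠ 0 := sub_ne_zero.2 (hQ n le_rfl)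
  induction m with
  | zero =>
    rw [Finset.sum_range_one, step q a b c d n 0 hq hb hc hd hg h6]
    simp [G0]
  | succ m ih =>
    rw [Finset.sum_range_succ, ih (by omega), step q a b c d n _ hq hb hc hd hg h6,
      G01 q a b c d n m hq hb hc hd hg (hQ m (by omega))]
    ring

lemma TT_top (q a b c d e : ℂ) (n : ℕ) (hq : q ≠ 0) : TT q a b c d e n (n+1) = 0 := by
  have : qPoch (q ^ (-(n : ℤ))) q (n+1) = 0 := by
    rw [qPoch_succ, ← zpow_natCast, ← zpow_add₀ hq]; simp
  rw [TT, this]; simp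

lemma RR_succ (q a b c d : ℂ) (n : ℕ) : RR q a b c d (n+1) = rho a b c d (q^(n+1)) * RR q a b c d n := by
  simp only [RR, rho, qPoch_succ]
  have e (x : ℂ) : a * q / x * q^n = a*q^(n+1)/x := by ring
  have e' : a * q * q^n = a*q^(n+1) := by ring
  simp only [e, e']
  simp only [div_eq_mul_inv, mul_inv]
  ring

lemma generic (q a b c d : ℂ) (n : ℕ) (hq : q ≠ 0) (hb : b ≠ 0) (hc : c ≠ 0)
    (hd : d ≠ 0) (hg : Gen q a b c d) (hQ : ∀ j, j < n → q^(j+1) ≠ 1) :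
    ∑ k ∈ Finset.range (n+1), TT q a b c d (a^2*q^(n+1)/(b*c*d)) n k = RR q a b c d n := by
  induction n with
  | zero =>
    have : 1 - a ≠ 0 := by have := hg.h1 0; intro h; apply this; linear_combination -h
    simp [TT, RR, qPoch_zero, this]
  | succ n ih =>
    have h := partialSum q a b c d n (n+1) hq hb hc hd hg (fun j hj => hQ j (by omega)) le_rfl
    rw [Finset.sum_sub_distrib, ← Finset.mul_sum, Finset.sum_range_succ _ (n+1),
      Finset.sum_range_succ (fun k => TT q a b c d (a^2*q^(n+1)/(b*c*d)) n k) (n+1), TT_top _ _ _ _ _ _ _ hq, add_zero,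
      ih (fun j hj => hQ j (by omega))] at h
    rw [RR_succ, Finset.sum_range_succ]
    have : G1 q a b c d (q^(n+1)) (n+1) = 0 := by
      have : q^(n+1) ≠ 0 := pow_ne_zero _ hq
      simp [G1, this]
    rw [this] at h
    linear_combination h

lemma gen_dense (q b c d : ℂ) (hq : q ≠ 0) : Dense {a : ℂ | Gen q a b c d} := by
  have aux : ∀ w : ℂ, ∀ z : ℂ, z ≠ 0 → {a : ℂ | a * z = w}.Countable := by
    intro w z hz
    apply (Set.countable_singleton (w / z)).mono
    intro a ha
    simp only [Set.mem_ofPred_eq] at ha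
    simp only [Set.mem_singleton_iff]
    rw [eq_div_iff hz, ha]
  have aux2 : ∀ w : ℂ, ∀ z : ℂ, z ≠ 0 → {a : ℂ | a^2 * z = w}.Countable := by
    intro w z hz
    obtain ⟨s, hs⟩ := IsAlgClosed.exists_pow_nat_eq (w / z) (n := 2) (by norm_num)
    apply ((Set.countable_singleton (-s)).insert s).mono
    intro a ha
    simp only [Set.mem_ofPred_eq] at ha
    rw [← eq_div_iff hz, ← hs] at ha
    simpa using sq_eq_sq_iff_eq_or_eq_neg.1 ha
  have hcount : ({0} ∪ (⋃ j : ℕ, {a : ℂ | a * q^j = 1}) ∪ (⋃ j : ℕ, {a : ℂ | a * q^j = b})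
     ∪ (⋃ j : ℕ, {a : ℂ | a * q^j = c}) ∪ (⋃ j : ℕ, {a : ℂ | a * q^j = d})
     ∪ (⋃ j : ℤ, {a : ℂ | a * q^j = b*c*d}) ∪ (⋃ j : ℕ, {a : ℂ | a^2 * q^j = b*c*d})).Countable := by
    have p1 : ∀ w : ℂ, (⋃ j : ℕ, {a : ℂ | a * q^j = w}).Countable := fun w =>
      Set.countable_iUnion fun j => aux w _ (pow_ne_zero _ hq)
    refine Set.Countable.union (Set.Countable.union (Set.Countable.union (Set.Countable.union
      (Set.Countable.union (Set.Countable.union (Set.countable_singleton 0) (p1 _)) (p1 _)) (p1 _)) (p1 _)) ?_) ?_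
    · exact Set.countable_iUnion fun j => aux _ _ (zpow_ne_zero _ hq)
    · exact Set.countable_iUnion fun j => aux2 _ _ (pow_ne_zero _ hq)
  refine (hcount.dense_compl ℂ).mono ?_
  intro a ha
  simp only [Set.mem_compl_iff, Set.mem_union, Set.mem_iUnion, Set.mem_ofPred_eq, not_or,
    not_exists, Set.mem_singleton_iff] at ha
  obtain ⟨⟨⟨⟨⟨⟨h0, h1⟩, h2⟩, h3⟩, h4⟩, h5⟩, h6⟩ := ha
  exact ⟨h0, h1, h2, h3, h4, h5, h6⟩

lemma qPoch_cont (f : ℂ → ℂ) (q a : ℂ) (k : ℕ) (hf : ContinuousAt f a) :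
    ContinuousAt (fun x => qPoch (f x) q k) a := by
  unfold qPoch
  fun_prop

/-- Jackson's summation of a terminating very-well-poised balanced ₈φ₇ series:
if `a²q^{n+1} = bcde`, then
`∑_{k=0}^n ((1-aq^{2k})/(1-a))
    ((a,b,c,d,e,q^{-n};q)_k/((q,aq/b,aq/c,aq/d,aq/e,aq^{n+1};q)_k)) q^k
  = ((aq,aq/(bc),aq/(bd),aq/(cd);q)_n)/((aq/b,aq/c,aq/d,aq/(bcd);q)_n)`,
assuming nonzero denominator factors. -/
theorem jackson_8phi7_summation (q a b c d e : ℂ) (n : ℕ)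
    (hbal : a ^ 2 * q ^ (n + 1) = b * c * d * e)
    (hq : q ≠ 0) (ha1 : a ≠ 1)
    (hb : b ≠ 0) (hc : c ≠ 0) (hd : d ≠ 0) (he : e ≠ 0)
    (hden : ∀ k ≤ n, qPoch q q k ≠ 0 ∧ qPoch (a * q / b) q k ≠ 0 ∧
      qPoch (a * q / c) q k ≠ 0 ∧ qPoch (a * q / d) q k ≠ 0 ∧
      qPoch (a * q / e) q k ≠ 0 ∧ qPoch (a * q ^ (n + 1)) q k ≠ 0)
    (hden' : qPoch (a * q / (b * c * d)) q n ≠ 0) :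
    ∑ k ∈ Finset.range (n + 1),
        (1 - a * q ^ (2 * k)) / (1 - a) *
          (qPoch a q k * qPoch b q k * qPoch c q k * qPoch d q k * qPoch e q k *
              qPoch (q ^ (-(n : ℤ))) q k /
            (qPoch q q k * qPoch (a * q / b) q k * qPoch (a * q / c) q k *
              qPoch (a * q / d) q k * qPoch (a * q / e) q k *
                qPoch (a * q ^ (n + 1)) q k)) * q ^ k =
      qPoch (a * q) q n * qPoch (a * q / (b * c)) q n * qPoch (a * q / (b * d)) q n *
          qPoch (a * q / (c * d)) q n /
        (qPoch (a * q / b) q n * qPoch (a * q / c) q n * qPoch (a * q / d) q n *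
          qPoch (a * q / (b * c * d)) q n) := by
  have ha : a ≠ 0 := by
    rintro rfl
    have : b * c * d * e ≠ 0 := by simp [hb, hc, hd, he]
    apply this; rw [← hbal]; simp
  have hbcd : b * c * d ≠ 0 := by simp [hb, hc, hd]
  have hee : e = a^2*q^(n+1)/(b*c*d) := by
    rw [eq_div_iff hbcd, hbal]; ring
  have hQ : ∀ j, j < n → q^(j+1) ≠ 1 := by
    intro j hj h
    apply (hden n le_rfl).1
    rw [qPoch, Finset.prod_eq_zero_iff]
    refine ⟨j, Finset.mem_range.2 hj, ?_⟩
    rw [← h]; ring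
  change ∑ k ∈ Finset.range (n+1), TT q a b c d e n k = RR q a b c d n
  have cL : ContinuousAt (fun x => ∑ k ∈ Finset.range (n+1),
      TT q x b c d (x^2*q^(n+1)/(b*c*d)) n k) a := by
    apply tendsto_finsetSum
    intro k hk
    obtain ⟨d1, d2, d3, d4, d5, d6⟩ := hden k (by have := Finset.mem_range.1 hk; omega)
    change ContinuousAt (fun x => TT q x b c d (x^2*q^(n+1)/(b*c*d)) n k) a
    unfold TT
    have ce : ContinuousAt (fun x : ℂ => x^2*q^(n+1)/(b*c*d)) a := by fun_prop
    refine ContinuousAt.mul (ContinuousAt.mul (ContinuousAt.div (by fun_prop) (by fun_prop)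
      (sub_ne_zero.2 ha1.symm)) (ContinuousAt.div ?_ ?_ ?_)) (by fun_prop)
    · exact ((((((qPoch_cont _ _ _ _ (by fun_prop)).mul (by fun_prop)).mul (by fun_prop)).mul
        (by fun_prop)).mul (qPoch_cont _ _ _ _ ce)).mul (by fun_prop))
    · refine (((((ContinuousAt.mul (by fun_prop) (qPoch_cont _ _ _ _ (by fun_prop))).mul
        (qPoch_cont _ _ _ _ (by fun_prop))).mul (qPoch_cont _ _ _ _ (by fun_prop))).mul
        (qPoch_cont _ _ _ _ (ContinuousAt.div (by fun_prop) ce (hee ▸ he)))).mul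
        (qPoch_cont _ _ _ _ (by fun_prop)))
    · rw [← hee]
      simp [d1, d2, d3, d4, d5, d6]
  have cR : ContinuousAt (fun x => RR q x b c d n) a := by
    obtain ⟨d1, d2, d3, d4, d5, d6⟩ := hden n le_rfl
    unfold RR
    refine ContinuousAt.div ?_ ?_ (by simp [d2, d3, d4, hden'])
    · exact ((((qPoch_cont _ _ _ _ (by fun_prop)).mul (qPoch_cont _ _ _ _ (by fun_prop))).mul
        (qPoch_cont _ _ _ _ (by fun_prop))).mul (qPoch_cont _ _ _ _ (by fun_prop)))
    · exact ((((qPoch_cont _ _ _ _ (by fun_prop)).mul (qPoch_cont _ _ _ _ (by fun_prop))).mul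
        (qPoch_cont _ _ _ _ (by fun_prop))).mul (qPoch_cont _ _ _ _ (by fun_prop)))
  have hne : (nhdsWithin a {x : ℂ | Gen q x b c d}).NeBot :=
    mem_closure_iff_nhdsWithin_neBot.1 (gen_dense q b c d hq a)
  have l1 := cL.tendsto.mono_left (nhdsWithin_le_nhds (s := {x : ℂ | Gen q x b c d}))
  have l2 := cR.tendsto.mono_left (nhdsWithin_le_nhds (s := {x : ℂ | Gen q x b c d}))
  have key := tendsto_nhds_unique (l1.congr' (by
    filter_upwards [self_mem_nhdsWithin] with x hx
    exact generic q x b c d n hq hb hc hd hx hQ)) l2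
  simp only [← hee] at key
  exact key
end
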